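/- arXiv:1405.1949 — 4 statements merged into one kernel-verified Lean document; each statement's English description precedes it below -/
import Mathlib

section
/- Let a, b, c be Gaussian integers that are squarefree and pairwise coprime, and let (x, y, z) be a nontrivial Gaussian integer solution of a·x² + b·y² + c·z² = 0 such that the only common divisors of x, y, z are units. Then x and y are coprime, x and z are coprime, and y and z are coprime. -/
local notation "ℤ[i]" => GaussianInt

/-- In a principal ideal domain, a primitive solution of `a * x ^ 2 + b * y ^ 2 + c * z ^ 2 = 0`
with `c` squarefree has `x` and `y` coprime. -/
theorem isCoprime_of_squarefree_of_primitive {R : Type*} [CommRing R] [IsDomain R]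
    [IsPrincipalIdealRing R] {a b c x y z : R} (hc : Squarefree c)
    (hsol : a * x ^ 2 + b * y ^ 2 + c * z ^ 2 = 0)
    (hprim : ∀ d : R, d ∣ x → d ∣ y → d ∣ z → IsUnit d) : IsCoprime x y := by
  refine isCoprime_of_prime_dvd ?_ fun p hp hpx hpy => ?_
  · rintro ⟨rfl, rfl⟩
    have hz : z = 0 := by simpa [hc.ne_zero] using hsol
    exact not_isUnit_zero (hprim 0 dvd_rfl dvd_rfl (by simp [hz]))
  · have hpz : ¬ p ∣ z := fun h => hp.not_isUnit (hprim p hpx hpy h)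
    have hdvd : p ^ 2 ∣ c * z ^ 2 := by
      rw [← dvd_add_right (((pow_dvd_pow_of_dvd hpx 2).mul_left a).add
        ((pow_dvd_pow_of_dvd hpy 2).mul_left b)), hsol]
      exact dvd_zero _
    have hpc : p ^ 2 ∣ c :=
      hp.pow_dvd_of_dvd_mul_right 2 (fun h => hpz (hp.dvd_of_dvd_pow h)) hdvd
    exact hp.not_isUnit (hc p (by rwa [← sq]))

/-- A primitive nontrivial solution of the Legendre equation in normal form has pairwise
coprime coordinates. -/
theorem legendre_primitive_pairwise_coprime (a b c x y z : ℤ[i])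
    (ha : Squarefree a) (hb : Squarefree b) (hc : Squarefree c)
    (hab : IsCoprime a b) (hac : IsCoprime a c) (hbc : IsCoprime b c)
    (hsol : a * x ^ 2 + b * y ^ 2 + c * z ^ 2 = 0)
    (hnt : (x, y, z) ≠ (0, 0, 0))
    (hprim : ∀ d : ℤ[i], d ∣ x → d ∣ y → d ∣ z → IsUnit d) :
    IsCoprime x y ∧ IsCoprime x z ∧ IsCoprime y z := by
  refine ⟨isCoprime_of_squarefree_of_primitive hc hsol hprim,
    isCoprime_of_squarefree_of_primitive (a := a) (b := c) hb ?_
      fun d hx hz hy => hprim d hx hy hz,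
    isCoprime_of_squarefree_of_primitive (a := b) (b := c) ha ?_
      fun d hy hz hx => hprim d hx hy hz⟩
  · linear_combination hsol
  · linear_combination hsol
end

section
/- Let a, b, c be pairwise coprime squarefree Gaussian integers, let (x₀, y₀, z₀) be Gaussian integers with a·x₀² + b·y₀² + c·z₀² = 0 and with x₀ and y₀ coprime, let X, Y, Z be Gaussian integers, and let δ be a Gaussian integer dividing both c and X·y₀ − Y·x₀. Then δ divides each of the three Gaussian integers x₀·(a·X² + b·Y² + c·Z²) − 2·X·(a·x₀·X + b·y₀·Y + c·z₀·Z), y₀·(a·X² + b·Y² + c·Z²) − 2·Y·(a·x₀·X + b·y₀·Y + c·z₀·Z), and z₀·(a·X² + b·Y² + c·Z²) − 2·Z·(a·x₀·X + b·y₀·Y + c·z₀·Z). -/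
local notation "ℤ[i]" => GaussianInt

/-- If `(x, y)` is unimodular and `δ ∣ X * y - Y * x`, then modulo `δ` the vector `(X, Y)` is a
multiple of `(x, y)`. -/
theorem IsCoprime.exists_dvd_sub_mul {R : Type*} [CommRing R] {x y X Y δ : R}
    (hxy : IsCoprime x y) (hδ : δ ∣ X * y - Y * x) :
    ∃ t, δ ∣ X - t * x ∧ δ ∣ Y - t * y := by
  obtain ⟨u, v, huv⟩ := hxy
  refine ⟨u * X + v * Y, (hδ.mul_left v).trans (dvd_of_eq ?_),
    (hδ.mul_left (-u)).trans (dvd_of_eq ?_)⟩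
  · linear_combination X * huv
  · linear_combination Y * huv

/-- If `δ` divides `c` and `X·y₀ − Y·x₀` then it divides the three parametric expressions. -/
theorem delta_divides_expressions (a b c x₀ y₀ z₀ X Y Z δ : ℤ[i])
    (ha : Squarefree a) (hb : Squarefree b) (hc : Squarefree c)
    (hab : IsCoprime a b) (hac : IsCoprime a c) (hbc : IsCoprime b c)
    (hsol : a * x₀ ^ 2 + b * y₀ ^ 2 + c * z₀ ^ 2 = 0)
    (hxy : IsCoprime x₀ y₀)
    (hδc : δ ∣ c) (hδ : δ ∣ X * y₀ - Y * x₀) :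
    δ ∣ x₀ * (a * X ^ 2 + b * Y ^ 2 + c * Z ^ 2) -
        2 * X * (a * x₀ * X + b * y₀ * Y + c * z₀ * Z) ∧
    δ ∣ y₀ * (a * X ^ 2 + b * Y ^ 2 + c * Z ^ 2) -
        2 * Y * (a * x₀ * X + b * y₀ * Y + c * z₀ * Z) ∧
    δ ∣ z₀ * (a * X ^ 2 + b * Y ^ 2 + c * Z ^ 2) -
        2 * Z * (a * x₀ * X + b * y₀ * Y + c * z₀ * Z) := by
  obtain ⟨t, ⟨k, hk⟩, ⟨l, hl⟩⟩ := hxy.exists_dvd_sub_mul hδ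
  obtain ⟨m, rfl⟩ := hδc
  obtain rfl : X = t * x₀ + δ * k := by linear_combination hk
  obtain rfl : Y = t * y₀ + δ * l := by linear_combination hl
  have hquad : δ ∣ a * (t * x₀ + δ * k) ^ 2 + b * (t * y₀ + δ * l) ^ 2 + δ * m * Z ^ 2 :=
    ⟨-t ^ 2 * m * z₀ ^ 2 + a * (2 * t * x₀ * k + δ * k ^ 2) +
      b * (2 * t * y₀ * l + δ * l ^ 2) + m * Z ^ 2, by linear_combination t ^ 2 * hsol⟩
  have hbilin : δ ∣ a * x₀ * (t * x₀ + δ * k) + b * y₀ * (t * y₀ + δ * l) + δ * m * z₀ * Z :=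
    ⟨-t * m * z₀ ^ 2 + a * x₀ * k + b * y₀ * l + m * z₀ * Z, by linear_combination t * hsol⟩
  exact ⟨(hquad.mul_left _).sub (hbilin.mul_left _), (hquad.mul_left _).sub (hbilin.mul_left _),
    (hquad.mul_left _).sub (hbilin.mul_left _)⟩
end

section
/- Let a, b, c, x₀, y₀, z₀, X, Y, Z be Gaussian integers such that a·b is squarefree and not a unit, c·z₀ ≠ 0, a·x₀² + b·y₀² + c·z₀² = 0, and y₀·X − x₀·Y ≠ 0. Then z₀·(a·X² + b·Y² + c·Z²) − 2·Z·(a·x₀·X + b·y₀·Y + c·z₀·Z) ≠ 0. -/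
local notation "ℤ[i]" => GaussianInt

/-- A form `a u² + b v²` with `a b` squarefree and not a unit is anisotropic. -/
theorem eq_zero_of_squarefree_of_mul_sq_add_mul_sq {R : Type*} [CommRing R] [IsDomain R]
    [IsIntegrallyClosed R] {a b u v : R} (hab : Squarefree (a * b)) (hab' : ¬ IsUnit (a * b))
    (h : a * u ^ 2 + b * v ^ 2 = 0) : u = 0 ∧ v = 0 := by
  have ha : a ≠ 0 := left_ne_zero_of_mul hab.ne_zero
  have hv : v = 0 := by
    by_contra hv
    have hsq : (a * u) ^ 2 = v ^ 2 * -(a * b) := by linear_combination a * h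
    obtain ⟨w, hw⟩ : v ∣ a * u :=
      (IsIntegrallyClosed.pow_dvd_pow_iff two_ne_zero).mp ⟨_, hsq⟩
    have hww : w * w = -(a * b) := by
      apply mul_left_cancel₀ (pow_ne_zero 2 hv)
      rw [← hsq, hw]
      ring
    have hunit : IsUnit w := hab w ((dvd_neg (a := w * w)).mp (dvd_of_eq hww))
    exact hab' (by simpa [hww] using (hunit.mul hunit).neg)
  subst hv
  exact ⟨by simpa [ha] using h, rfl⟩

/-- The new `z`-coordinate of the descent never vanishes. -/
theorem new_z_ne_zero (a b c x₀ y₀ z₀ X Y Z : ℤ[i])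
    (hab : Squarefree (a * b)) (hab' : ¬ IsUnit (a * b))
    (hcz : c * z₀ ≠ 0)
    (hsol : a * x₀ ^ 2 + b * y₀ ^ 2 + c * z₀ ^ 2 = 0)
    (hXY : y₀ * X - x₀ * Y ≠ 0) :
    z₀ * (a * X ^ 2 + b * Y ^ 2 + c * Z ^ 2) -
      2 * Z * (a * x₀ * X + b * y₀ * Y + c * z₀ * Z) ≠ 0 := by
  intro h
  have hform : a * (z₀ * X - Z * x₀) ^ 2 + b * (z₀ * Y - Z * y₀) ^ 2 = 0 := by
    linear_combination z₀ * h + Z ^ 2 * hsol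
  obtain ⟨hu, hv⟩ := eq_zero_of_squarefree_of_mul_sq_add_mul_sq hab hab' hform
  apply mul_ne_zero (right_ne_zero_of_mul hcz) hXY
  linear_combination y₀ * hu - x₀ * hv
end

section
/- Let a, b be Gaussian integers such that a·b is squarefree and not a unit. If x and y are Gaussian integers with a·x² + b·y² = 0, then x = 0 and y = 0. -/
local notation "ℤ[i]" => GaussianInt

/-- In an integrally closed domain, a squarefree nonunit times a nonzero square is never the
negative of a square. -/
theorem Squarefree.eq_zero_of_mul_sq_eq_neg_sq {R : Type*} [CommRing R] [IsDomain R]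
    [IsIntegrallyClosed R] {d x z : R} (hd : Squarefree d) (hd' : ¬ IsUnit d)
    (h : d * x ^ 2 = -z ^ 2) : x = 0 := by
  by_contra hx
  have hdvd : x ^ 2 ∣ z ^ 2 := ⟨-d, by linear_combination h⟩
  obtain ⟨w, rfl⟩ := (IsIntegrallyClosed.pow_dvd_pow_iff two_ne_zero).1 hdvd
  have hw : d = -(w * w) := mul_right_cancel₀ (pow_ne_zero 2 hx) (by linear_combination h)
  have hu : IsUnit w := hd w ⟨-1, by rw [hw]; ring⟩
  exact hd' (hw ▸ (hu.mul hu).neg)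

/-- If `a·b` is squarefree and not a unit, the binary equation `a·x² + b·y² = 0` has only the
trivial solution. -/
theorem binary_only_trivial (a b x y : ℤ[i])
    (hab : Squarefree (a * b)) (hab' : ¬ IsUnit (a * b))
    (h : a * x ^ 2 + b * y ^ 2 = 0) :
    x = 0 ∧ y = 0 :=
  ⟨hab.eq_zero_of_mul_sq_eq_neg_sq (z := b * y) hab' (by linear_combination b * h),
    hab.eq_zero_of_mul_sq_eq_neg_sq (z := a * x) hab' (by linear_combination a * h)⟩
end
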